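/- Let λ > 0, λ ≠ 1, μ = 1/λ, and in ℂ³ take ξ = e₁, η = e₂, ζ = e₃. Let X = X(ξ,η,ζ;λ) be the 9×9 matrix with nonzero entries X₁₁ = X₅₅ = X₉₉ = X₁₅ = X₅₁ = X₁₉ = X₉₁ = X₅₉ = X₉₅ = 1; X₂₂ = X₆₆ = X₇₇ = λ²; X₃₃ = X₄₄ = X₈₈ = μ² (all other entries 0, since the inner products ⟨η,ξ⟩, ⟨ζ,ξ⟩, ⟨ζ,η⟩ vanish). Then X and its partial transpose X^τ are positive semidefinite, rank X = 7, and rank X^τ = 6. -/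

import Mathlib

open Matrix Complex
open scoped ComplexOrder

/-- The partial transpose of a `9 × 9` matrix viewed as a `3 × 3` array of `3 × 3`
blocks `B_{ij}`: the `(i,j)` block of `pt9 X` is `B_{ji}`. -/
def pt9 (X : Matrix (Fin 9) (Fin 9) ℂ) : Matrix (Fin 9) (Fin 9) ℂ :=
  Matrix.of fun i j =>
    X ⟨3 * ((j : ℕ) / 3) + (i : ℕ) % 3, by have := j.isLt; omega⟩
      ⟨3 * ((i : ℕ) / 3) + (j : ℕ) % 3, by have := i.isLt; omega⟩

/-- The matrix `X(e₁,e₂,e₃;λ)` (with `μ = 1/λ`): here the inner products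
`⟨η,ξ⟩, ⟨ζ,ξ⟩, ⟨ζ,η⟩` all vanish. -/
def X10 (lam mu : ℝ) : Matrix (Fin 9) (Fin 9) ℂ :=
  !![1, 0, 0, 0, 1, 0, 0, 0, 1;
     0, (lam : ℂ)^2, 0, 0, 0, 0, 0, 0, 0;
     0, 0, (mu : ℂ)^2, 0, 0, 0, 0, 0, 0;
     0, 0, 0, (mu : ℂ)^2, 0, 0, 0, 0, 0;
     1, 0, 0, 0, 1, 0, 0, 0, 1;
     0, 0, 0, 0, 0, (lam : ℂ)^2, 0, 0, 0;
     0, 0, 0, 0, 0, 0, (lam : ℂ)^2, 0, 0;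
     0, 0, 0, 0, 0, 0, 0, (mu : ℂ)^2, 0;
     1, 0, 0, 0, 1, 0, 0, 0, 1]

/-!
Let `f : ι → κ` be surjective and let `a : ι → R` vanish nowhere. Restricting `a` to the fibers of
`f` gives `card κ` nonzero vectors with disjoint supports, so the matrix with entries
`star (a i) * a j` for `f i = f j`, and `0` otherwise, is the Gram matrix of a factor with `card κ`
independent rows: it is positive semidefinite of rank `card κ`.

On `ℂ³ ⊗ ℂ³`, `X` is such a matrix for the map that collapses the three diagonal pairs `(i, i)` to
one point, which has `7` fibers. Since `λ * μ = 1`, the partial transpose is such a matrix for the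
same vector `a` and the map sending `(i, j)` to the unordered pair `s(i, j)`, which has `6` fibers.
-/

section FiberGram

variable {R ι κ : Type*} [DecidableEq κ]

/-- The matrix whose row at `k` is the restriction of the vector `a` to the fiber of `f` over `k`,
extended by zero. It is the factor in the Gram decomposition of `fiberGram f a`. -/
def fiberMatrix [Zero R] (f : ι → κ) (a : ι → R) : Matrix κ ι R :=
  of fun k i => if f i = k then a i else 0

/-- The direct sum, over the fibers of `f`, of the rank-one matrices formed by the restrictions
of the vector `a`. Both `X` and its partial transpose are of this form. -/
def fiberGram [Zero R] [Mul R] [Star R] (f : ι → κ) (a : ι → R) : Matrix ι ι R :=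
  of fun i j => if f i = f j then star (a i) * a j else 0

theorem fiberGram_eq_conjTranspose_mul_self [NonUnitalSemiring R] [StarRing R] [Fintype κ]
    (f : ι → κ) (a : ι → R) :
    fiberGram f a = (fiberMatrix f a)ᴴ * fiberMatrix f a := by
  ext i j
  simp [fiberGram, fiberMatrix, mul_apply, apply_ite star, eq_comm]

theorem posSemidef_fiberGram [Ring R] [PartialOrder R] [StarRing R] [StarOrderedRing R]
    [Finite κ] [Finite ι] (f : ι → κ) (a : ι → R) : (fiberGram f a).PosSemidef := by
  have := Fintype.ofFinite κ
  rw [fiberGram_eq_conjTranspose_mul_self]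
  exact posSemidef_conjTranspose_mul_self _

theorem rank_fiberMatrix [Field R] [Fintype κ] [Fintype ι] {f : ι → κ}
    (hf : f.Surjective) {a : ι → R} (ha : ∀ i, a i ≠ 0) :
    (fiberMatrix f a).rank = Fintype.card κ := by
  obtain ⟨g, hg⟩ := hf.hasRightInverse
  have diagonal_minor : (fiberMatrix f a).submatrix id g = diagonal (a ∘ g) := by
    ext k l
    by_cases hkl : k = l <;> simp [fiberMatrix, hg l, hkl, Ne.symm]
  have isUnit_diagonal : IsUnit (diagonal (a ∘ g)) := by
    simp [isUnit_diagonal, Pi.isUnit_iff, ha]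
  refine le_antisymm (rank_le_card_height _) ?_
  calc
    Fintype.card κ = (diagonal (a ∘ g)).rank := (rank_of_isUnit _ isUnit_diagonal).symm
    _ = ((fiberMatrix f a).submatrix id g).rank := by rw [diagonal_minor]
    _ ≤ (fiberMatrix f a).rank := rank_submatrix_le _ _ _

theorem rank_fiberGram [Field R] [PartialOrder R] [StarRing R] [StarOrderedRing R]
    [Fintype κ] [Fintype ι] {f : ι → κ} (hf : f.Surjective) {a : ι → R} (ha : ∀ i, a i ≠ 0) :
    (fiberGram f a).rank = Fintype.card κ := by
  rw [fiberGram_eq_conjTranspose_mul_self, rank_conjTranspose_mul_self, rank_fiberMatrix hf ha]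

end FiberGram

section CollapseDiag

variable {n : Type*} [DecidableEq n]

/-- The quotient map of `n × n` that identifies all diagonal pairs with each other; their common
class is encoded as `none`. -/
def collapseDiag (p : n × n) : Option {p : n × n // p.1 ≠ p.2} :=
  if h : p.1 = p.2 then none else some ⟨p, h⟩

theorem collapseDiag_eq_iff {p q : n × n} :
    collapseDiag p = collapseDiag q ↔ p = q ∨ p.1 = p.2 ∧ q.1 = q.2 := by
  unfold collapseDiag
  split_ifs <;> grind

theorem collapseDiag_surjective [Nonempty n] :
    (collapseDiag : n × n → Option {p : n × n // p.1 ≠ p.2}).Surjective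
  | none => ⟨(Classical.arbitrary n, Classical.arbitrary n), dif_pos rfl⟩
  | some p => ⟨p, dif_neg p.2⟩

theorem card_option_fst_ne_snd [Fintype n] :
    Fintype.card (Option {p : n × n // p.1 ≠ p.2}) =
      Fintype.card n * (Fintype.card n - 1) + 1 := by
  have card_offDiag : Fintype.card {p : n × n // p.1 ≠ p.2} =
      (Finset.univ : Finset n).offDiag.card :=
    Fintype.card_of_subtype _ (by simp)
  rw [Fintype.card_option, card_offDiag, Finset.offDiag_card, Finset.card_univ, Nat.mul_sub_one]

end CollapseDiag

theorem sym2Mk_uncurry_surjective {n : Type*} : (Sym2.mk (α := n)).uncurry.Surjective :=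
  Sym2.ind fun i j => ⟨(i, j), rfl⟩

section PartialTranspose

variable {R m n : Type*}

/-- The partial transpose of a matrix on a product index type: the blocks, which are indexed by
the first factor, are permuted as in a transpose and are themselves left as they are. -/
def partialTranspose (M : Matrix (m × n) (m × n) R) : Matrix (m × n) (m × n) R :=
  of fun p q => M (q.1, p.2) (p.1, q.2)

theorem partialTranspose_fiberGram_collapseDiag [DecidableEq n] [Zero R] [Mul R] [Star R]
    {a : n × n → R} (ha : ∀ i j, star (a (i, j)) * a (j, i) = star (a (j, j)) * a (i, i)) :
    partialTranspose (fiberGram collapseDiag a) = fiberGram Sym2.mk.uncurry a := by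
  -- The entry at `((j, j), (i, i))` moves to `((i, j), (j, i))`, which is where `ha` is needed.
  ext ⟨i, k⟩ ⟨j, l⟩
  simp only [partialTranspose, fiberGram, of_apply, collapseDiag_eq_iff, Prod.mk.injEq,
    Function.uncurry_apply_pair, Sym2.eq_iff]
  grind

end PartialTranspose

theorem X10_ppt_rank_general {R n : Type*} [Field R] [PartialOrder R] [StarRing R]
    [StarOrderedRing R] [Fintype n] [DecidableEq n] [Nonempty n] {a : n × n → R}
    (ha₀ : ∀ p, a p ≠ 0)
    (ha : ∀ i j, star (a (i, j)) * a (j, i) = star (a (j, j)) * a (i, i)) :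
    (fiberGram collapseDiag a).PosSemidef ∧
      (partialTranspose (fiberGram collapseDiag a)).PosSemidef ∧
      (fiberGram collapseDiag a).rank = Fintype.card n * (Fintype.card n - 1) + 1 ∧
      (partialTranspose (fiberGram collapseDiag a)).rank = (Fintype.card n + 1).choose 2 := by
  rw [partialTranspose_fiberGram_collapseDiag ha]
  refine ⟨posSemidef_fiberGram _ a, posSemidef_fiberGram _ a, ?_, ?_⟩
  · rw [rank_fiberGram collapseDiag_surjective ha₀, card_option_fst_ne_snd]
  · rw [rank_fiberGram sym2Mk_uncurry_surjective ha₀, Sym2.card]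

/-- The identification of an index `k` inside the `i`-th block, as the pair `(i, k)`, with the
position `3 * i + k` in a `9 × 9` matrix. -/
def blockIndexEquiv : Fin 3 × Fin 3 ≃ Fin 9 :=
  finProdFinEquiv

theorem blockIndexEquiv_val (p : Fin 3 × Fin 3) : (blockIndexEquiv p : ℕ) = 3 * p.1 + p.2 :=
  Nat.add_comm _ _

theorem submatrix_pt9 (X : Matrix (Fin 9) (Fin 9) ℂ) :
    (pt9 X).submatrix blockIndexEquiv blockIndexEquiv =
      partialTranspose (X.submatrix blockIndexEquiv blockIndexEquiv) := by
  ext ⟨i, k⟩ ⟨j, l⟩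
  simp only [pt9, partialTranspose, of_apply, submatrix_apply]
  congr 1 <;> ext <;> simp only [blockIndexEquiv_val] <;> omega

/-- The vector on `Fin 3 × Fin 3` for which `X10 lam mu` is the Gram matrix of the fibers of
`collapseDiag`; its entries square to the diagonal of `X10 lam mu`. -/
def x10Vector (lam mu : ℝ) (p : Fin 3 × Fin 3) : ℂ :=
  !![1, (lam : ℂ), (mu : ℂ);
     (mu : ℂ), 1, (lam : ℂ);
     (lam : ℂ), (mu : ℂ), 1] p.1 p.2

theorem submatrix_X10 (lam mu : ℝ) :
    (X10 lam mu).submatrix blockIndexEquiv blockIndexEquiv =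
      fiberGram collapseDiag (x10Vector lam mu) := by
  ext ⟨i, k⟩ ⟨j, l⟩
  simp only [fiberGram, of_apply, collapseDiag_eq_iff]
  fin_cases i <;> fin_cases k <;> fin_cases j <;> fin_cases l <;>
    simp [X10, x10Vector, blockIndexEquiv, finProdFinEquiv, sq]

theorem x10Vector_ne_zero {lam mu : ℝ} (h : lam * mu = 1) (p : Fin 3 × Fin 3) :
    x10Vector lam mu p ≠ 0 := by
  obtain ⟨i, j⟩ := p
  fin_cases i <;> fin_cases j <;>
    simp [x10Vector, left_ne_zero_of_mul_eq_one h, right_ne_zero_of_mul_eq_one h]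

theorem star_x10Vector_mul_swap {lam mu : ℝ} (h : lam * mu = 1) (i j : Fin 3) :
    star (x10Vector lam mu (i, j)) * x10Vector lam mu (j, i) =
      star (x10Vector lam mu (j, j)) * x10Vector lam mu (i, i) := by
  have hC : (lam : ℂ) * mu = 1 := mod_cast h
  fin_cases i <;> fin_cases j <;> simp [x10Vector, hC, mul_comm (mu : ℂ)]

/-- With `ξ = e₁, η = e₂, ζ = e₃`: `X` is PPT with `rank X = 7` and `rank X^τ = 6`
(a `(7,6)` edge state). -/
theorem X10_ppt_rank (lam mu : ℝ) (h0 : 0 < lam) (h1 : lam ≠ 1) (hmu : mu = 1 / lam) :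
    (X10 lam mu).PosSemidef ∧ (pt9 (X10 lam mu)).PosSemidef ∧
      (X10 lam mu).rank = 7 ∧ (pt9 (X10 lam mu)).rank = 6 := by
  have h : lam * mu = 1 := by rw [hmu, mul_one_div_cancel h0.ne']
  simpa [← submatrix_X10, ← submatrix_pt9, Nat.choose]
    using X10_ppt_rank_general (x10Vector_ne_zero h) (star_x10Vector_mul_swap h)
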